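/- Let n ≥ 2 and define r ∈ End(k^n ⊗ k^n) by r(e_j⊗e_ℓ) = sgn(j-ℓ)·((1/2)(e_j⊗e_ℓ + e_ℓ⊗e_j) + ∑_{s strictly between j and ℓ} e_s⊗e_{j+ℓ-s}) - ((j-ℓ)/n)·e_j⊗e_ℓ. Then PrP = -r, where P is the flip operator on k^n⊗k^n. -/

import Mathlib

open TensorProduct Finset

/-- Let n ≥ 2 and define r ∈ End(k^n ⊗ k^n) by
r(e_j⊗e_ℓ) = sgn(j-ℓ)((1/2)(e_j⊗e_ℓ + e_ℓ⊗e_j) + ∑_{s strictly between j and ℓ}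
e_s⊗e_{j+ℓ-s}) - ((j-ℓ)/n)·e_j⊗e_ℓ.  Then PrP = -r, where P is the flip
operator on k^n⊗k^n.  (Indices s and j+ℓ-s stay in range, so reducing them
mod n below is harmless.) -/
theorem stmt_19 (k : Type*) [Field k] [CharZero k] (n : ℕ) (hn : 2 ≤ n)
    (e : Fin n → (Fin n → k)) (he : ∀ i, e i = Pi.single i 1)
    (r : ((Fin n → k) ⊗[k] (Fin n → k)) →ₗ[k] ((Fin n → k) ⊗[k] (Fin n → k)))
    (hr : ∀ j ℓ : Fin n, r (e j ⊗ₜ[k] e ℓ) =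
      (if (ℓ : ℕ) < (j : ℕ) then (1 : k) else if (j : ℕ) < (ℓ : ℕ) then -1 else 0) •
        ((2 : k)⁻¹ • (e j ⊗ₜ[k] e ℓ + e ℓ ⊗ₜ[k] e j) +
          ∑ s ∈ Ioo (min (j : ℕ) (ℓ : ℕ)) (max (j : ℕ) (ℓ : ℕ)),
            e ⟨s % n, Nat.mod_lt _ (by omega)⟩ ⊗ₜ[k]
              e ⟨((j : ℕ) + (ℓ : ℕ) - s) % n, Nat.mod_lt _ (by omega)⟩) -
      ((((j : ℕ) : k) - ((ℓ : ℕ) : k)) / (n : k)) • (e j ⊗ₜ[k] e ℓ)) :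
    (TensorProduct.comm k (Fin n → k) (Fin n → k)).toLinearMap ∘ₗ r ∘ₗ
      (TensorProduct.comm k (Fin n → k) (Fin n → k)).toLinearMap = -r := by
  have key : ∀ j l : Fin n,
      (TensorProduct.comm k (Fin n → k) (Fin n → k)) (r (e l ⊗ₜ[k] e j)) =
        -r (e j ⊗ₜ[k] e l) := by
    intro j l
    have hsum : ∑ s ∈ Ioo (min (l : ℕ) (j : ℕ)) (max (l : ℕ) (j : ℕ)),
            e ⟨((l : ℕ) + (j : ℕ) - s) % n, Nat.mod_lt _ (by omega)⟩ ⊗ₜ[k]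
              e ⟨s % n, Nat.mod_lt _ (by omega)⟩ =
          ∑ s ∈ Ioo (min (j : ℕ) (l : ℕ)) (max (j : ℕ) (l : ℕ)),
            e ⟨s % n, Nat.mod_lt _ (by omega)⟩ ⊗ₜ[k]
              e ⟨((j : ℕ) + (l : ℕ) - s) % n, Nat.mod_lt _ (by omega)⟩ := by
      refine Finset.sum_bij' (fun s _ => (l : ℕ) + (j : ℕ) - s)
        (fun s _ => (l : ℕ) + (j : ℕ) - s) ?_ ?_ ?_ ?_ ?_
      · intro s hs
        simp only [Finset.mem_Ioo] at hs ⊢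
        omega
      · intro s hs
        simp only [Finset.mem_Ioo] at hs ⊢
        omega
      · intro s hs
        simp only [Finset.mem_Ioo] at hs ⊢
        omega
      · intro s hs
        simp only [Finset.mem_Ioo] at hs ⊢
        omega
      · intro s hs
        simp only [Finset.mem_Ioo] at hs
        have h : (j : ℕ) + (l : ℕ) - ((l : ℕ) + (j : ℕ) - s) = s := by omega
        simp only [h]
    rw [hr l j, hr j l]
    simp only [map_sub, map_add, map_smul, map_sum, TensorProduct.comm_tmul]
    rw [hsum]
    generalize (∑ s ∈ Ioo (min (j : ℕ) (l : ℕ)) (max (j : ℕ) (l : ℕ)),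
            e ⟨s % n, Nat.mod_lt _ (by omega)⟩ ⊗ₜ[k]
              e ⟨((j : ℕ) + (l : ℕ) - s) % n, Nat.mod_lt _ (by omega)⟩) = S
    rcases lt_trichotomy (j : ℕ) (l : ℕ) with h | h | h
    · simp only [h, not_lt_of_gt h, if_true, if_false]
      module
    · simp [h]
    · simp only [h, not_lt_of_gt h, if_true, if_false]
      module
  refine TensorProduct.ext' fun x y => ?_
  have hx : ∀ x : Fin n → k, x = ∑ i, x i • e i := by
    intro x
    simp only [he]
    exact pi_eq_sum_univ' x
  rw [hx x, hx y]
  simp only [TensorProduct.sum_tmul, TensorProduct.tmul_sum, map_sum]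
  refine Finset.sum_congr rfl fun a _ => Finset.sum_congr rfl fun b _ => ?_
  rw [← TensorProduct.smul_tmul', TensorProduct.tmul_smul, map_smul, map_smul, map_smul, map_smul]
  congr 2
  exact key _ _
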